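/- Let $n, m \in \mathbb{N}$ with $m + 1 < n$, let $a_J, a_1, \dots, a_m \in \mathbb{R}$, $b_J, b_1, \dots, b_m \in \mathbb{R}^n$ and $c_J, c_1, \dots, c_m \in \mathbb{R}$, and consider the S-QCQP problem: minimize $J(x) = a_J\|x\|^2 + 2 b_J^T x + c_J$ over $x \in \mathbb{R}^n$ subject to $f_k(x) = a_k\|x\|^2 + 2 b_k^T x + c_k \le 0$ for $k = 1, \dots, m$, where $\|\cdot\|$ is the Euclidean norm. Its relaxation SDP2 is: over pairs $(x, y) \in \mathbb{R}^n \times \mathbb{R}^n$, minimize $a_J \sum_{i=1}^n y_i + 2 b_J^T x$ (the additive constant $c_J$ being omitted) subject to $a_k \sum_{i=1}^n y_i + 2 b_k^T x + c_k \le 0$ for $k = 1, \dots, m$ and $x_i^2 \le y_i$ for $i = 1, \dots, n$. Assume there exists $\gamma' \in \mathbb{R}^m$ with $\gamma'_k \ge 0$ for all $k$, $\gamma' \ne 0$, such that $a_J + \sum_{k=1}^m \gamma'_k a_k \ge 0$; let $x^*$ be a global minimizer of the S-QCQP; and assume there exists $x_0 \in \mathbb{R}^n$ with $f_k(x_0)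 < 0$ for all $k = 1, \dots, m$. Then the pair $(x^*, y^*)$ with $y^*_i := (x^*_i)^2$ for $i = 1, \dots, n$ is a global minimizer of SDP2, and the optimal value of SDP2 plus the omitted constant $c_J$ equals $J(x^*)$; i.e. the relaxation SDP2 is exact. -/

import Mathlib

open Matrix

/-- The data of a scalar QCQP in `n` variables with `m` constraints:
minimize `aJ xᵀx + 2 bJᵀx + cJ` subject to `a k xᵀx + 2 (b k)ᵀx + c k ≤ 0` for all `k`. -/
structure SQCQP (n m : ℕ) where
  aJ : ℝ
  bJ : Fin n → ℝ
  cJ : ℝ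
  a : Fin m → ℝ
  b : Fin m → Fin n → ℝ
  c : Fin m → ℝ

namespace SQCQP

/-- The objective `J`; here `x ⬝ᵥ x = xᵀx = ‖x‖²` (Euclidean norm). -/
def J {n m : ℕ} (P : SQCQP n m) (x : Fin n → ℝ) : ℝ :=
  P.aJ * (x ⬝ᵥ x) + 2 * (P.bJ ⬝ᵥ x) + P.cJ

/-- The constraint functions `f_k`. -/
def f {n m : ℕ} (P : SQCQP n m) (k : Fin m) (x : Fin n → ℝ) : ℝ :=
  P.a k * (x ⬝ᵥ x) + 2 * (P.b k ⬝ᵥ x) + P.c k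

/-- The feasible set of the S-QCQP. -/
def feasible {n m : ℕ} (P : SQCQP n m) : Set (Fin n → ℝ) :=
  {x | ∀ k, P.f k x ≤ 0}

/-- `x` is a global minimizer of the S-QCQP. -/
def IsGlobalMin {n m : ℕ} (P : SQCQP n m) (x : Fin n → ℝ) : Prop :=
  x ∈ P.feasible ∧ ∀ z ∈ P.feasible, P.J x ≤ P.J z

/-- The objective of the relaxation SDP2, which omits the additive constant `cJ`. -/
def sdp2Obj {n m : ℕ} (P : SQCQP n m) (p : (Fin n → ℝ) × (Fin n → ℝ)) : ℝ :=
  P.aJ * (∑ i, p.2 i) + 2 * (P.bJ ⬝ᵥ p.1)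

/-- The feasible set of the relaxation SDP2, consisting of pairs `(x, y)`. -/
def sdp2Feasible {n m : ℕ} (P : SQCQP n m) : Set ((Fin n → ℝ) × (Fin n → ℝ)) :=
  {p | (∀ k, P.a k * (∑ i, p.2 i) + 2 * (P.b k ⬝ᵥ p.1) + P.c k ≤ 0) ∧
    ∀ i, p.1 i ^ 2 ≤ p.2 i}

/-- The pair `p = (x, y)` is a global minimizer of SDP2. -/
def IsSDP2GlobalMin {n m : ℕ} (P : SQCQP n m) (p : (Fin n → ℝ) × (Fin n → ℝ)) : Prop :=
  p ∈ P.sdp2Feasible ∧ ∀ q ∈ P.sdp2Feasible, P.sdp2Obj p ≤ P.sdp2Obj q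

end SQCQP

/-! The relaxation replaces `‖x‖²` by a free number `s ≥ ‖x‖²`. If some `v ≠ 0` makes a nonpositive
dot product with `bJ` and with every `b k`, then walking from `x` in the direction `v` until the
squared norm equals `s` turns a relaxed solution into a feasible point of the S-QCQP with no larger
objective. For `m < n` such a `v` exists: take `v` orthogonal to every `b k`, and replace it by `-v`
if its dot product with `bJ` is positive. -/

section DotProduct

variable {ι κ : Type*} [Fintype ι] [Fintype κ]

theorem exists_ne_zero_forall_dotProduct_eq_zero {K : Type*} [Field K]
    (hcard : Fintype.card ι < Fintype.card κ) (b : ι → κ → K) :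
    ∃ v : κ → K, v ≠ 0 ∧ ∀ i, b i ⬝ᵥ v = 0 := by
  have hker : LinearMap.ker (Matrix.of b).mulVecLin ≠ ⊥ :=
    LinearMap.ker_ne_bot_of_finrank_lt (by simpa only [Module.finrank_fintype_fun_eq_card])
  obtain ⟨v, hv, hv0⟩ := Submodule.exists_mem_ne_zero_of_ne_bot hker
  exact ⟨v, hv0, congrFun (LinearMap.mem_ker.1 hv)⟩

theorem exists_ne_zero_forall_dotProduct_eq_zero_and_dotProduct_nonpos {K : Type*} [Field K]
    [LinearOrder K] [IsStrictOrderedRing K] (hcard : Fintype.card ι < Fintype.card κ)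
    (b : ι → κ → K) (c : κ → K) : ∃ v : κ → K, v ≠ 0 ∧ (∀ i, b i ⬝ᵥ v = 0) ∧ c ⬝ᵥ v ≤ 0 := by
  obtain ⟨v, hv, hb⟩ := exists_ne_zero_forall_dotProduct_eq_zero hcard b
  rcases le_total (c ⬝ᵥ v) 0 with hc | hc
  · exact ⟨v, hv, hb, hc⟩
  · refine ⟨-v, neg_ne_zero.2 hv, fun i => ?_, ?_⟩
    · rw [dotProduct_neg, hb i, neg_zero]
    · rwa [dotProduct_neg, neg_nonpos]

theorem dotProduct_self_add_smul {R : Type*} [CommSemiring R] (x v : κ → R) (t : R) :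
    (x + t • v) ⬝ᵥ (x + t • v) = x ⬝ᵥ x + 2 * t * (x ⬝ᵥ v) + t ^ 2 * (v ⬝ᵥ v) := by
  simp only [add_dotProduct, dotProduct_add, smul_dotProduct, dotProduct_smul, smul_eq_mul,
    dotProduct_comm v x]
  ring

theorem exists_nonneg_dotProduct_self_add_smul_eq {v : κ → ℝ} (hv : v ≠ 0) {x : κ → ℝ} {s : ℝ}
    (hs : x ⬝ᵥ x ≤ s) : ∃ t : ℝ, 0 ≤ t ∧ (x + t • v) ⬝ᵥ (x + t • v) = s := by
  have hvv : 0 < v ⬝ᵥ v := by simpa using dotProduct_star_self_pos_iff.2 hv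
  -- A quarter of the discriminant of the quadratic `‖x + t • v‖² - s` in `t`.
  set D := (x ⬝ᵥ v) ^ 2 + (v ⬝ᵥ v) * (s - x ⬝ᵥ x) with hD
  have hD_ge : (x ⬝ᵥ v) ^ 2 ≤ D := le_add_of_nonneg_right (mul_nonneg hvv.le (sub_nonneg.2 hs))
  have hsqrt : √D ^ 2 = D := Real.sq_sqrt ((sq_nonneg _).trans hD_ge)
  have hle_sqrt : x ⬝ᵥ v ≤ √D := Real.le_sqrt_of_sq_le hD_ge
  refine ⟨(√D - x ⬝ᵥ v) / (v ⬝ᵥ v), div_nonneg (sub_nonneg.2 hle_sqrt) hvv.le, ?_⟩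
  rw [dotProduct_self_add_smul]
  field_simp
  linear_combination hsqrt + hD

end DotProduct

namespace SQCQP

variable {n m : ℕ} (P : SQCQP n m)

theorem mk_sq_mem_sdp2Feasible_iff {x : Fin n → ℝ} :
    (x, fun i => x i ^ 2) ∈ P.sdp2Feasible ↔ x ∈ P.feasible := by
  simp [sdp2Feasible, feasible, f, dotProduct, sq]

theorem sdp2Obj_mk_sq_add_cJ (x : Fin n → ℝ) :
    P.sdp2Obj (x, fun i => x i ^ 2) + P.cJ = P.J x := by
  simp [J, sdp2Obj, dotProduct, sq]

variable {P}

theorem exists_mem_feasible_J_le_of_dotProduct_nonpos {v : Fin n → ℝ} (hv : v ≠ 0)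
    (hbJ : P.bJ ⬝ᵥ v ≤ 0) (hb : ∀ k, P.b k ⬝ᵥ v ≤ 0) {p : (Fin n → ℝ) × (Fin n → ℝ)}
    (hp : p ∈ P.sdp2Feasible) :
    ∃ z ∈ P.feasible, P.J z ≤ P.sdp2Obj p + P.cJ := by
  have hle : p.1 ⬝ᵥ p.1 ≤ ∑ i, p.2 i :=
    Finset.sum_le_sum fun i _ => (sq (p.1 i)).symm.trans_le (hp.2 i)
  obtain ⟨t, ht, hsphere⟩ := exists_nonneg_dotProduct_self_add_smul_eq hv hle
  have hlinear {w : Fin n → ℝ} (hw : w ⬝ᵥ v ≤ 0) : w ⬝ᵥ (p.1 + t • v) ≤ w ⬝ᵥ p.1 := by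
    rw [dotProduct_add, dotProduct_smul, smul_eq_mul]
    exact add_le_of_nonpos_right (mul_nonpos_of_nonneg_of_nonpos ht hw)
  refine ⟨p.1 + t • v, fun k => ?_, ?_⟩
  · rw [f, hsphere]
    linarith [hp.1 k, hlinear (hb k)]
  · rw [J, sdp2Obj, hsphere]
    linarith [hlinear hbJ]

theorem IsGlobalMin.J_le_sdp2Obj_add_cJ (hmn : m < n) {x : Fin n → ℝ} (hx : P.IsGlobalMin x)
    {p : (Fin n → ℝ) × (Fin n → ℝ)} (hp : p ∈ P.sdp2Feasible) :
    P.J x ≤ P.sdp2Obj p + P.cJ := by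
  obtain ⟨v, hv, hb, hbJ⟩ := exists_ne_zero_forall_dotProduct_eq_zero_and_dotProduct_nonpos
    (by simpa only [Fintype.card_fin] using hmn) P.b P.bJ
  obtain ⟨z, hz, hzp⟩ :=
    exists_mem_feasible_J_le_of_dotProduct_nonpos hv hbJ (fun k => (hb k).le) hp
  exact (hx.2 z hz).trans hzp

end SQCQP

theorem stmt_8_general {n m : ℕ} (hmn : m < n) (P : SQCQP n m) {x : Fin n → ℝ}
    (hx : P.IsGlobalMin x) :
    P.IsSDP2GlobalMin (x, fun i => x i ^ 2) ∧
      IsLeast ((fun p => P.sdp2Obj p + P.cJ) '' P.sdp2Feasible) (P.J x) := by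
  have hmem : (x, fun i => x i ^ 2) ∈ P.sdp2Feasible := P.mk_sq_mem_sdp2Feasible_iff.2 hx.1
  have hobj : P.sdp2Obj (x, fun i => x i ^ 2) + P.cJ = P.J x := P.sdp2Obj_mk_sq_add_cJ x
  refine ⟨⟨hmem, fun q hq => ?_⟩, ⟨_, hmem, hobj⟩, ?_⟩
  · exact le_of_add_le_add_right (hobj.trans_le (hx.J_le_sdp2Obj_add_cJ hmn hq))
  · rintro _ ⟨q, hq, rfl⟩
    exact hx.J_le_sdp2Obj_add_cJ hmn hq

/-- Exactness of SDP2: `(x*, y*)` with `y*_i = (x*_i)²` is a global minimizer of SDP2, and the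
optimal value of SDP2, with the omitted constant `cJ` added back, is attained and equals `J x*`. -/
theorem stmt_8 (n m : ℕ) (hmn : m + 1 < n) (P : SQCQP n m)
    (hγ : ∃ γ' : Fin m → ℝ, (∀ k, 0 ≤ γ' k) ∧ γ' ≠ 0 ∧ 0 ≤ P.aJ + ∑ k, γ' k * P.a k)
    (xstar : Fin n → ℝ) (hx : P.IsGlobalMin xstar)
    (hslater : ∃ x₀ : Fin n → ℝ, ∀ k, P.f k x₀ < 0) :
    P.IsSDP2GlobalMin (xstar, fun i => xstar i ^ 2) ∧
      IsLeast ((fun p => P.sdp2Obj p + P.cJ) '' P.sdp2Feasible) (P.J xstar) :=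
  stmt_8_general (Nat.lt_of_succ_lt hmn) P hx
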